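/- In X = ℝ³ equipped with the ℓ₃ norm and with exponent p = 3, let M₁ = span{(1,0,1/2), (1,1,99/100)} and M₂ = span{(1,0,1/2), (1,1,101/100)}. Then the pair (M₁, M₂) is NOT linear Bregman regular: more precisely, with v_λ = (1−λ)(1,0,1/2) + λ(1,1,1), the ratio D₃(Π³_{M₁∩M₂} v_λ, v_λ) / max{D₃(Π³_{M₁} v_λ, v_λ), D₃(Π³_{M₂} v_λ, v_λ)} tends to infinity as λ → 0⁺, so no constant κ > 0 satisfies D₃(M₁∩M₂, x) ≤ κ max{D₃(M₁,x), D₃(M₂,x)} for all x ∈ X. -/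

import Mathlib

open Filter Topology

noncomputable section

/-- The modulus of convexity of a normed space `X`. -/
def modConvex (X : Type*) [NormedAddCommGroup X] (ε : ℝ) : ℝ :=
  sInf {d : ℝ | ∃ x y : X, ‖x‖ = 1 ∧ ‖y‖ = 1 ∧ ε ≤ ‖x - y‖ ∧ d = 1 - ‖x + y‖ / 2}

/-- The modulus of smoothness of a normed space `X`. -/
def modSmooth (X : Type*) [NormedAddCommGroup X] [NormedSpace ℝ X] (τ : ℝ) : ℝ :=
  sSup {d : ℝ | ∃ x y : X, ‖x‖ = 1 ∧ ‖y‖ = 1 ∧ d = (‖x + τ • y‖ + ‖x - τ • y‖) / 2 - 1}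

/-- `X` is uniformly convex: the modulus of convexity is positive for positive ε. -/
def UnifConvex (X : Type*) [NormedAddCommGroup X] : Prop :=
  ∀ ε : ℝ, 0 < ε → ε ≤ 2 → 0 < modConvex X ε

/-- `X` is uniformly smooth: `ρ_X(τ)/τ → 0` as `τ → 0⁺`. -/
def UnifSmooth (X : Type*) [NormedAddCommGroup X] [NormedSpace ℝ X] : Prop :=
  Tendsto (fun τ => modSmooth X τ / τ) (𝓝[>] (0 : ℝ)) (𝓝 0)

/-- `X` is uniformly convex of power type `ρ`. -/
def PowerConvex (X : Type*) [NormedAddCommGroup X] (ρ : ℝ) : Prop :=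
  ∃ c > (0 : ℝ), ∀ ε ∈ Set.Icc (0 : ℝ) 2, c * ε ^ ρ ≤ modConvex X ε

/-- `X` is uniformly smooth of power type `σ` (with `σ > 1`). -/
def PowerSmooth (X : Type*) [NormedAddCommGroup X] [NormedSpace ℝ X] (σ : ℝ) : Prop :=
  1 < σ ∧ ∃ C > (0 : ℝ), ∀ τ ∈ Set.Icc (0 : ℝ) 1, modSmooth X τ ≤ C * τ ^ σ

variable {X : Type*} [NormedAddCommGroup X] [NormedSpace ℝ X]

/-- The duality mapping `j_p`, the Fréchet derivative of `x ↦ (1/p)‖x‖^p`. -/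
def dualityMap (p : ℝ) (x : X) : X →L[ℝ] ℝ :=
  fderiv ℝ (fun y : X => 1 / p * ‖y‖ ^ p) x

/-- The Bregman distance `D_p(x, y)`. -/
def bregmanDist (p : ℝ) (x y : X) : ℝ :=
  1 / p * ‖x‖ ^ p - 1 / p * ‖y‖ ^ p - dualityMap p y (x - y)

/-- The Bregman projection of `x` onto the set `S`: the minimizer of `m ↦ D_p(m, x)` over `S`. -/
def bregmanProj (p : ℝ) (S : Set X) (x : X) : X :=
  letI : Nonempty X := ⟨x⟩
  Classical.epsilon fun y => y ∈ S ∧ ∀ m ∈ S, bregmanDist p y x ≤ bregmanDist p m x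

/-- The Bregman distance `D_p(S, x)` from the point `x` to the set `S`. -/
def bregmanDistSet (p : ℝ) (S : Set X) (x : X) : ℝ :=
  bregmanDist p (bregmanProj p S x) x

/-- The metric projection of `x` onto the set `S`: the point of `S` nearest to `x`. -/
def metricProj (S : Set X) (x : X) : X :=
  letI : Nonempty X := ⟨x⟩
  Classical.epsilon fun y => y ∈ S ∧ ∀ m ∈ S, ‖x - y‖ ≤ ‖x - m‖

instance : Fact ((1 : ENNReal) ≤ 3) := ⟨by norm_num⟩

/-- `ℝ³` equipped with the `ℓ₃` norm. -/
abbrev l3Space : Type := PiLp 3 (fun _ : Fin 3 => ℝ)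

/-- The vector `(x, y, z)` in `ℝ³` with the `ℓ₃` norm. -/
def vec3 (x y z : ℝ) : l3Space :=
  (WithLp.equiv 3 (∀ _ : Fin 3, ℝ)).symm ![x, y, z]

/-- `M₁ = span{(1, 0, 1/2), (1, 1, 99/100)}`. -/
def subM₁ : Submodule ℝ l3Space :=
  Submodule.span ℝ {vec3 1 0 (1 / 2), vec3 1 1 (99 / 100)}

/-- `M₂ = span{(1, 0, 1/2), (1, 1, 101/100)}`. -/
def subM₂ : Submodule ℝ l3Space :=
  Submodule.span ℝ {vec3 1 0 (1 / 2), vec3 1 1 (101 / 100)}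

/-- The curve `v_λ = (1 − λ)(1, 0, 1/2) + λ(1, 1, 1)`. -/
def vlam (lam : ℝ) : l3Space :=
  (1 - lam) • vec3 1 0 (1 / 2) + lam • vec3 1 1 1

/-!
Around a point `x` near `e = (1, 0, 1/2)` the functional `D₃(·, x)` is quadratic in the first and
third coordinates but, at scale `λ`, only of size `λ³` in the second one, as `e` vanishes there.
The point `v_λ` can be moved into `M₁` or `M₂` by changing its second coordinate alone by an amount
of order `λ`, which costs `O(λ³)`. On the line `M₁ ∩ M₂ = ℝ e` the first and third coordinates are
tied together, and reaching it from `v_λ` costs at least a multiple of `λ²`.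
-/

section BregmanDist

variable {p : ℝ}

theorem bregmanDist_self (x : X) : bregmanDist p x x = 0 := by simp [bregmanDist]

theorem dualityMap_smul (t : ℝ) (x : X) :
    t • dualityMap p (t • x) = |t| ^ p • dualityMap p x := by
  have hscale : (fun y : X => 1 / p * ‖t • y‖ ^ p) = |t| ^ p • fun y : X => 1 / p * ‖y‖ ^ p := by
    ext y
    simp only [norm_smul, Real.norm_eq_abs, Real.mul_rpow (abs_nonneg t) (norm_nonneg y),
      Pi.smul_apply, smul_eq_mul]
    ring
  rw [dualityMap, ← fderiv_comp_smul (f := fun y : X => 1 / p * ‖y‖ ^ p), hscale,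
    fderiv_const_smul_field, Pi.smul_apply, dualityMap]

theorem bregmanDist_smul_smul (t : ℝ) (x y : X) :
    bregmanDist p (t • x) (t • y) = |t| ^ p * bregmanDist p x y := by
  have hdual : dualityMap p (t • y) (t • (x - y)) = |t| ^ p * dualityMap p y (x - y) := by
    simpa using DFunLike.congr_fun (dualityMap_smul t y) (x - y)
  rw [bregmanDist, ← smul_sub, hdual, bregmanDist]
  simp only [norm_smul, Real.norm_eq_abs, Real.mul_rpow (abs_nonneg t) (norm_nonneg _)]
  ring

theorem continuous_bregmanDist_left (hp : 0 ≤ p) (y : X) :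
    Continuous fun x => bregmanDist p x y := by
  unfold bregmanDist
  exact ((continuous_const.mul (continuous_norm.rpow_const fun _ => .inr hp)).sub
    continuous_const).sub (by fun_prop)

theorem tendsto_bregmanDist_cobounded_atTop (hp : 1 < p) (y : X) :
    Tendsto (fun x => bregmanDist p x y) (Bornology.cobounded X) atTop := by
  set L := dualityMap p y
  have hgrowth : Tendsto (fun r : ℝ => r * (1 / p * r ^ (p - 1) - ‖L‖) +
      (L y - 1 / p * ‖y‖ ^ p)) atTop atTop := by
    refine tendsto_atTop_add_const_right _ _ (tendsto_id.atTop_mul_atTop₀ ?_)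
    exact tendsto_atTop_add_const_right _ _
      ((tendsto_rpow_atTop (by linarith)).const_mul_atTop (by positivity))
  refine tendsto_atTop_mono (fun x => ?_) (hgrowth.comp tendsto_norm_cobounded_atTop)
  have hpow : ‖x‖ ^ p = ‖x‖ * ‖x‖ ^ (p - 1) := by
    rw [← Real.rpow_one_add' (norm_nonneg x) (by linarith)]
    ring_nf
  have hL : L x ≤ ‖L‖ * ‖x‖ := (le_abs_self _).trans (L.le_opNorm x)
  simp only [Function.comp_apply, bregmanDist, map_sub, hpow]
  linarith

theorem exists_isMinOn_bregmanDist [ProperSpace X] (hp : 1 < p) {S : Set X} (hS : IsClosed S)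
    (hne : S.Nonempty) (x : X) : ∃ y ∈ S, IsMinOn (fun m => bregmanDist p m x) S y := by
  obtain ⟨m, hm⟩ := hne
  refine (continuous_bregmanDist_left (by linarith) x).continuousOn.exists_isMinOn' hS hm ?_
  rw [← Metric.cobounded_eq_cocompact]
  exact ((tendsto_bregmanDist_cobounded_atTop hp x).eventually_ge_atTop _).filter_mono inf_le_left

theorem bregmanProj_mem_and_isMinOn [ProperSpace X] (hp : 1 < p) {S : Set X} (hS : IsClosed S)
    (hne : S.Nonempty) (x : X) :
    bregmanProj p S x ∈ S ∧ IsMinOn (fun m => bregmanDist p m x) S (bregmanProj p S x) :=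
  Classical.epsilon_spec (exists_isMinOn_bregmanDist hp hS hne x)

theorem bregmanDistSet_le [ProperSpace X] (hp : 1 < p) {S : Set X} (hS : IsClosed S) {m : X}
    (hm : m ∈ S) (x : X) : bregmanDistSet p S x ≤ bregmanDist p m x :=
  (bregmanProj_mem_and_isMinOn hp hS ⟨m, hm⟩ x).2 hm

theorem le_bregmanDistSet [ProperSpace X] (hp : 1 < p) {S : Set X} (hS : IsClosed S)
    (hne : S.Nonempty) {x : X} {c : ℝ} (h : ∀ m ∈ S, c ≤ bregmanDist p m x) :
    c ≤ bregmanDistSet p S x :=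
  h _ (bregmanProj_mem_and_isMinOn hp hS hne x).1

end BregmanDist

section PiLp

variable {ι : Type*} [Fintype ι] {q : ENNReal} [Fact (1 ≤ q)] {β : ι → Type*}
  [∀ i, NormedAddCommGroup (β i)]

theorem piLp_norm_rpow_toReal (hq : q ≠ ⊤) (x : PiLp q β) :
    ‖x‖ ^ q.toReal = ∑ i, ‖x i‖ ^ q.toReal := by
  have hpos : 0 < q.toReal := q.toReal_pos_iff_ne_top.2 hq
  rw [PiLp.norm_eq_sum hpos, ← Real.rpow_mul (by positivity), one_div_mul_cancel hpos.ne',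
    Real.rpow_one]

variable [∀ i, NormedSpace ℝ (β i)]

theorem dualityMap_piLp (hq : q ≠ ⊤) {y : PiLp q β}
    (hy : ∀ i, DifferentiableAt ℝ (fun z : β i => ‖z‖ ^ q.toReal) (y i)) :
    dualityMap q.toReal y = ∑ i, (dualityMap q.toReal (y i)).comp (PiLp.proj (𝕜 := ℝ) q β i) := by
  have hsum : (fun z : PiLp q β => 1 / q.toReal * ‖z‖ ^ q.toReal) =
      fun z => ∑ i, 1 / q.toReal * ‖z i‖ ^ q.toReal := by
    ext z
    rw [piLp_norm_rpow_toReal hq, Finset.mul_sum]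
  rw [dualityMap, hsum]
  exact (HasFDerivAt.fun_sum fun i _ => ((hy i).const_mul _).hasFDerivAt.comp y
    (PiLp.proj (𝕜 := ℝ) q β i).hasFDerivAt).fderiv

theorem bregmanDist_piLp (hq : q ≠ ⊤) (x : PiLp q β) {y : PiLp q β}
    (hy : ∀ i, DifferentiableAt ℝ (fun z : β i => ‖z‖ ^ q.toReal) (y i)) :
    bregmanDist q.toReal x y = ∑ i, bregmanDist q.toReal (x i) (y i) := by
  simp [bregmanDist, dualityMap_piLp hq hy, piLp_norm_rpow_toReal hq, Finset.sum_sub_distrib,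
    Finset.mul_sum]

end PiLp

section ExponentThree

theorem dualityMap_real {p : ℝ} (hp : 1 < p) (b h : ℝ) :
    dualityMap p b h = |b| ^ (p - 2) * b * h := by
  have hderiv := ((hasDerivAt_abs_rpow b hp).const_mul (1 / p)).hasFDerivAt.fderiv
  simp only [dualityMap, Real.norm_eq_abs, hderiv, ContinuousLinearMap.toSpanSingleton_apply,
    smul_eq_mul]
  field_simp

theorem bregmanDist_three_real (a b : ℝ) :
    bregmanDist 3 a b = |b| / 2 * (a - b) ^ 2 + (2 * |a| + |b|) / 6 * (|a| - |b|) ^ 2 := by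
  have hexp : (3 : ℝ) - 2 = 1 := by norm_num
  have hcube (t : ℝ) : t ^ (3 : ℝ) = t ^ 3 := mod_cast Real.rpow_natCast t 3
  rw [bregmanDist, dualityMap_real (by norm_num), hexp, hcube, hcube, Real.rpow_one,
    Real.norm_eq_abs, Real.norm_eq_abs]
  linear_combination |b| / 2 * sq_abs a - |b| / 2 * sq_abs b

theorem sq_le_bregmanDist_three_real (a b : ℝ) :
    |b| / 2 * (a - b) ^ 2 ≤ bregmanDist 3 a b := by
  rw [bregmanDist_three_real]
  exact le_add_of_nonneg_right (by positivity)

theorem bregmanDist_three_real_nonneg (a b : ℝ) : 0 ≤ bregmanDist 3 a b := by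
  rw [bregmanDist_three_real]
  positivity

theorem bregmanDist_three_real_pos {a b : ℝ} (hab : a ≠ b) : 0 < bregmanDist 3 a b := by
  rw [bregmanDist_three_real]
  rcases eq_or_ne b 0 with rfl | hb
  · simp only [abs_zero, sub_zero]
    positivity
  · have hsq : 0 < (a - b) ^ 2 := sq_pos_of_ne_zero (sub_ne_zero.2 hab)
    exact add_pos_of_pos_of_nonneg (mul_pos (by positivity) hsq) (by positivity)

variable {ι : Type*} [Fintype ι]

theorem bregmanDist_three_piLp (x y : PiLp 3 fun _ : ι => ℝ) :
    bregmanDist 3 x y = ∑ i, bregmanDist 3 (x i) (y i) := by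
  simpa using bregmanDist_piLp (q := 3) (by norm_num) x
    fun i => differentiable_norm_rpow (by norm_num) (y i)

theorem bregmanDist_three_piLp_pos {x y : PiLp 3 fun _ : ι => ℝ} (hxy : x ≠ y) :
    0 < bregmanDist 3 x y := by
  obtain ⟨i, hi⟩ : ∃ i, x i ≠ y i := by
    contrapose! hxy
    exact PiLp.ext hxy
  rw [bregmanDist_three_piLp]
  exact Finset.sum_pos' (fun j _ => bregmanDist_three_real_nonneg _ _)
    ⟨i, Finset.mem_univ i, bregmanDist_three_real_pos hi⟩

theorem bregmanDistSet_three_piLp_pos {S : Set (PiLp 3 fun _ : ι => ℝ)} (hS : IsClosed S)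
    (hne : S.Nonempty) {x : PiLp 3 fun _ : ι => ℝ} (hx : x ∉ S) : 0 < bregmanDistSet 3 S x :=
  bregmanDist_three_piLp_pos
    (ne_of_mem_of_not_mem (bregmanProj_mem_and_isMinOn (by norm_num) hS hne x).1 hx)

end ExponentThree

section Planes

/-- The plane `span{(1, 0, 1/2), (1, 1, c)}`; `M₁` and `M₂` are the members `c = 99/100` and
`c = 101/100` of this family. -/
def planeThrough (c : ℝ) : Submodule ℝ l3Space :=
  Submodule.span ℝ {vec3 1 0 (1 / 2), vec3 1 1 c}

theorem mem_planeThrough {c : ℝ} {x : l3Space} :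
    x ∈ planeThrough c ↔ x 2 = x 0 / 2 + (c - 1 / 2) * x 1 := by
  rw [planeThrough, Submodule.mem_span_pair]
  constructor
  · rintro ⟨a, b, rfl⟩
    simp only [vec3, WithLp.equiv_symm_apply, PiLp.add_apply, PiLp.smul_apply, Matrix.cons_val,
      smul_eq_mul]
    ring
  · intro h
    refine ⟨x 0 - x 1, x 1, ?_⟩
    ext i
    fin_cases i <;> simp [vec3, h]
    ring

theorem vec3_mem_planeThrough {a b c d : ℝ} :
    vec3 a b d ∈ planeThrough c ↔ d = a / 2 + (c - 1 / 2) * b :=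
  mem_planeThrough

theorem mem_planeThrough_inf_planeThrough {c d : ℝ} (hcd : c ≠ d) {x : l3Space} :
    x ∈ planeThrough c ⊓ planeThrough d ↔ x 1 = 0 ∧ x 2 = x 0 / 2 := by
  rw [Submodule.mem_inf, mem_planeThrough, mem_planeThrough]
  constructor
  · rintro ⟨hc, hd⟩
    have hx1 : x 1 = 0 := by
      refine (mul_eq_zero.1 (?_ : (c - d) * x 1 = 0)).resolve_left (sub_ne_zero.2 hcd)
      linarith
    exact ⟨hx1, by simpa [hx1] using hc⟩
  · rintro ⟨hx1, hx2⟩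
    simp [hx1, hx2]

theorem bregmanDist_vec3 (x : l3Space) (a b c : ℝ) :
    bregmanDist 3 x (vec3 a b c) =
      bregmanDist 3 (x 0) a + bregmanDist 3 (x 1) b + bregmanDist 3 (x 2) c := by
  simp [bregmanDist_three_piLp, Fin.sum_univ_three, vec3]

theorem vlam_eq_vec3 (l : ℝ) : vlam l = vec3 1 l ((1 + l) / 2) := by
  ext i
  fin_cases i <;> simp [vlam, vec3]
  ring

theorem vlam_notMem_planeThrough {c l : ℝ} (hc : c ≠ 1) (hl : l ≠ 0) :
    vlam l ∉ planeThrough c := by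
  rw [vlam_eq_vec3, vec3_mem_planeThrough]
  intro h
  have hmul : (c - 1) * l = 0 := by linarith
  exact mul_ne_zero (sub_ne_zero.2 hc) hl hmul

theorem bregmanDistSet_planeThrough_vlam_le {c : ℝ} (hc : c ≠ 1 / 2) (l : ℝ) :
    bregmanDistSet 3 (planeThrough c : Set l3Space) (vlam l) ≤
      |l| ^ 3 * bregmanDist 3 (2 * c - 1)⁻¹ 1 := by
  have hc' : 2 * c - 1 ≠ 0 := by
    contrapose! hc
    linarith
  have hmem : vec3 1 (l * (2 * c - 1)⁻¹) ((1 + l) / 2) ∈ planeThrough c := by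
    rw [vec3_mem_planeThrough]
    field_simp
  have hscale : bregmanDist 3 (l * (2 * c - 1)⁻¹) l = |l| ^ 3 * bregmanDist 3 (2 * c - 1)⁻¹ 1 := by
    simpa using bregmanDist_smul_smul (p := 3) l (2 * c - 1)⁻¹ 1
  calc bregmanDistSet 3 (planeThrough c : Set l3Space) (vlam l)
      ≤ bregmanDist 3 (vec3 1 (l * (2 * c - 1)⁻¹) ((1 + l) / 2)) (vlam l) :=
        bregmanDistSet_le (by norm_num) (Submodule.closed_of_finiteDimensional _) hmem _
    _ = bregmanDist 3 (l * (2 * c - 1)⁻¹) l := by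
        rw [vlam_eq_vec3, bregmanDist_vec3]
        simp [vec3, bregmanDist_self]
    _ = |l| ^ 3 * bregmanDist 3 (2 * c - 1)⁻¹ 1 := hscale

theorem le_bregmanDistSet_inf_vlam {c d l : ℝ} (hcd : c ≠ d) (hl : 0 ≤ l) :
    l ^ 2 / 18 ≤ bregmanDistSet 3
      ((planeThrough c ⊓ planeThrough d : Submodule ℝ l3Space) : Set l3Space) (vlam l) := by
  refine le_bregmanDistSet (by norm_num) (Submodule.closed_of_finiteDimensional _)
    (Submodule.nonempty _) fun m hm => ?_
  obtain ⟨-, hm2⟩ := (mem_planeThrough_inf_planeThrough hcd).1 hm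
  rw [vlam_eq_vec3, bregmanDist_vec3, hm2]
  have h0 := sq_le_bregmanDist_three_real (m 0) 1
  have h1 := bregmanDist_three_real_nonneg (m 1) l
  have h2 := sq_le_bregmanDist_three_real (m 0 / 2) ((1 + l) / 2)
  rw [abs_one] at h0
  rw [abs_of_nonneg (by positivity)] at h2
  have hslack : 0 ≤ l * (m 0 / 2 - (1 + l) / 2) ^ 2 := by positivity
  -- The right-hand side is minimal at `m 0 = 1 + l / 9`.
  have hmin : l ^ 2 / 18 ≤ (m 0 - 1) ^ 2 / 2 + (m 0 - 1 - l) ^ 2 / 16 := by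
    linarith [sq_nonneg (9 * (m 0 - 1) - l)]
  linarith

end Planes

theorem max_bregmanDistSet_vlam_pos {l : ℝ} (hl : l ≠ 0) :
    0 < max (bregmanDistSet 3 (subM₁ : Set l3Space) (vlam l))
      (bregmanDistSet 3 (subM₂ : Set l3Space) (vlam l)) :=
  lt_max_of_lt_left (bregmanDistSet_three_piLp_pos (Submodule.closed_of_finiteDimensional _)
    (Submodule.nonempty _) (vlam_notMem_planeThrough (by norm_num) hl))

theorem max_bregmanDistSet_vlam_le (l : ℝ) :
    max (bregmanDistSet 3 (subM₁ : Set l3Space) (vlam l))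
      (bregmanDistSet 3 (subM₂ : Set l3Space) (vlam l)) ≤ |l| ^ 3 := by
  have hle {c : ℝ} (hc : c ≠ 1 / 2) (hdist : bregmanDist 3 (2 * c - 1)⁻¹ 1 ≤ 1) :
      bregmanDistSet 3 (planeThrough c : Set l3Space) (vlam l) ≤ |l| ^ 3 :=
    (bregmanDistSet_planeThrough_vlam_le hc l).trans
      (mul_le_of_le_one_right (by positivity) hdist)
  refine max_le (hle (by norm_num) ?_) (hle (by norm_num) ?_) <;>
    norm_num [bregmanDist_three_real, abs_of_pos]

theorem inv_div_le_bregmanDistSet_vlam_ratio {l : ℝ} (hl : 0 < l) :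
    l⁻¹ / 18 ≤
      bregmanDistSet 3 ((subM₁ ⊓ subM₂ : Submodule ℝ l3Space) : Set l3Space) (vlam l) /
        max (bregmanDistSet 3 (subM₁ : Set l3Space) (vlam l))
          (bregmanDistSet 3 (subM₂ : Set l3Space) (vlam l)) := by
  rw [le_div_iff₀ (max_bregmanDistSet_vlam_pos hl.ne')]
  calc l⁻¹ / 18 * max _ _
      ≤ l⁻¹ / 18 * |l| ^ 3 := by gcongr; exact max_bregmanDistSet_vlam_le l
    _ = l ^ 2 / 18 := by rw [abs_of_pos hl]; field_simp
    _ ≤ _ := le_bregmanDistSet_inf_vlam (by norm_num) hl.le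

theorem tendsto_bregmanDistSet_vlam_ratio :
    Tendsto
      (fun l : ℝ =>
        bregmanDistSet 3 ((subM₁ ⊓ subM₂ : Submodule ℝ l3Space) : Set l3Space) (vlam l) /
          max (bregmanDistSet 3 (subM₁ : Set l3Space) (vlam l))
            (bregmanDistSet 3 (subM₂ : Set l3Space) (vlam l)))
      (𝓝[>] (0 : ℝ)) atTop := by
  have hinv : Tendsto (fun l : ℝ => l⁻¹ / 18) (𝓝[>] 0) atTop :=
    tendsto_inv_nhdsGT_zero.atTop_div_const (by norm_num)
  refine tendsto_atTop_mono' _ ?_ hinv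
  filter_upwards [self_mem_nhdsWithin] with l hl using inv_div_le_bregmanDistSet_vlam_ratio hl

theorem statement10 :
    Filter.Tendsto
      (fun lam : ℝ =>
        bregmanDistSet 3 ((subM₁ ⊓ subM₂ : Submodule ℝ l3Space) : Set l3Space) (vlam lam) /
          max (bregmanDistSet 3 (subM₁ : Set l3Space) (vlam lam))
              (bregmanDistSet 3 (subM₂ : Set l3Space) (vlam lam)))
      (𝓝[>] (0 : ℝ)) Filter.atTop ∧
    ¬ ∃ κ > (0 : ℝ), ∀ x : l3Space,
        bregmanDistSet 3 ((subM₁ ⊓ subM₂ : Submodule ℝ l3Space) : Set l3Space) x ≤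
          κ * max (bregmanDistSet 3 (subM₁ : Set l3Space) x)
                  (bregmanDistSet 3 (subM₂ : Set l3Space) x) := by
  have hratio := tendsto_bregmanDistSet_vlam_ratio
  refine ⟨hratio, ?_⟩
  rintro ⟨κ, -, hκ⟩
  obtain ⟨l, hκl, hl⟩ :=
    ((hratio.eventually_gt_atTop κ).and eventually_mem_nhdsWithin).exists
  have hmax := max_bregmanDistSet_vlam_pos (ne_of_gt hl)
  exact hκl.not_ge ((div_le_iff₀ hmax).2 (hκ (vlam l)))
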